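/- arXiv:2602.04623 — 2 statements merged into one kernel-verified Lean document; each statement's English description precedes it below -/
import Mathlib

section
/- Let M and I be positive integers and let h_1, …, h_I ∈ ℂ^M be vectors whose complex linear span is all of ℂ^M. Then the function z ∈ ℝ^I ↦ log det(∑_{i=1}^I e^{z_i} h_i h_i^*) is convex on ℝ^I. (The matrix ∑_{i=1}^I e^{z_i} h_i h_i^* is Hermitian positive definite since the h_i span ℂ^M and all weights e^{z_i} are positive, so its determinant is a positive real number.) -/
open Matrix

/-!
By the Cauchy–Binet formula, `det (∑ i, w i • h i (h i)ᴴ)` is a polynomial in the weights `w` whose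
coefficients are squared absolute values of maximal minors of the matrix with rows `h i`.
Substituting `w i = exp (z i)` turns it into a sum of exponentials of linear forms in `z` with
nonnegative coefficients, at least one of them positive because the vectors `h i` span, and the
logarithm of such a sum is convex.
-/

section Convexity

variable {E κ : Type*} [AddCommMonoid E] [Module ℝ E] {s : Set E} {f : κ → E → ℝ}

lemma convexOn_finset_sum (hs : Convex ℝ s) (t : Finset κ) (hf : ∀ k ∈ t, ConvexOn ℝ s (f k)) :
    ConvexOn ℝ s fun x => ∑ k ∈ t, f k x := by
  classical
  induction t using Finset.induction_on with
  | empty => simpa only [Finset.sum_empty] using convexOn_const 0 hs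
  | insert k t hk ih =>
    simp only [Finset.sum_insert hk]
    exact (hf k (t.mem_insert_self k)).add (ih fun j hj => hf j (Finset.mem_insert_of_mem hj))

lemma convexOn_log_sum_mul_exp [Fintype κ] {c : κ → ℝ} (hc : ∀ k, 0 ≤ c k)
    (hc_pos : ∃ k, 0 < c k) (hf : ∀ k, ConvexOn ℝ s (f k)) :
    ConvexOn ℝ s fun x => Real.log (∑ k, c k * Real.exp (f k x)) := by
  obtain ⟨k₀, hk₀⟩ := hc_pos
  set F : E → ℝ := fun x => ∑ k, c k * Real.exp (f k x)
  have F_pos (x : E) : 0 < F x :=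
    Finset.sum_pos' (fun k _ => mul_nonneg (hc k) (Real.exp_pos _).le)
      ⟨k₀, Finset.mem_univ _, mul_pos hk₀ (Real.exp_pos _)⟩
  -- After normalizing the sums to `1`, it suffices to add up the convexity inequalities for `exp`.
  have sum_normalized (x : E) : ∑ k, c k * Real.exp (f k x - Real.log (F x)) = 1 := by
    simp only [Real.exp_sub, Real.exp_log (F_pos x), ← mul_div_assoc, ← Finset.sum_div]
    exact div_self (F_pos x).ne'
  refine ⟨(hf k₀).1, fun x hx y hy a b ha hb hab => ?_⟩
  simp only [smul_eq_mul]
  rw [Real.log_le_iff_le_exp (F_pos _)]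
  set L := a * Real.log (F x) + b * Real.log (F y) with hL
  have term_le (k : κ) : Real.exp (f k (a • x + b • y)) ≤ Real.exp L *
      (a * Real.exp (f k x - Real.log (F x)) + b * Real.exp (f k y - Real.log (F y))) :=
    calc Real.exp (f k (a • x + b • y))
        ≤ Real.exp (a * f k x + b * f k y) := Real.exp_le_exp.2 ((hf k).2 hx hy ha hb hab)
      _ = Real.exp L *
            Real.exp (a * (f k x - Real.log (F x)) + b * (f k y - Real.log (F y))) := by
          rw [← Real.exp_add, hL]; ring_nf
      _ ≤ _ := mul_le_mul_of_nonneg_left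
          (convexOn_exp.2 (Set.mem_univ _) (Set.mem_univ _) ha hb hab) (Real.exp_pos L).le
  calc F (a • x + b • y)
      ≤ ∑ k, c k * (Real.exp L *
          (a * Real.exp (f k x - Real.log (F x)) + b * Real.exp (f k y - Real.log (F y)))) :=
        Finset.sum_le_sum fun k _ => mul_le_mul_of_nonneg_left (term_le k) (hc k)
    _ = Real.exp L * (a * ∑ k, c k * Real.exp (f k x - Real.log (F x)) +
          b * ∑ k, c k * Real.exp (f k y - Real.log (F y))) := by
        simp only [Finset.mul_sum, ← Finset.sum_add_distrib]
        exact Finset.sum_congr rfl fun k _ => by ring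
    _ = Real.exp L := by rw [sum_normalized, sum_normalized, mul_one, mul_one, hab, mul_one]

end Convexity

section CauchyBinet

variable {n ι R : Type*} [Fintype n] [DecidableEq n] [Fintype ι] [CommRing R]

lemma det_mul_eq_sum_prod_mul_det (A : Matrix n ι R) (B : Matrix ι n R) :
    (A * B).det = ∑ p : n → ι, (∏ m, A m (p m)) * (B.submatrix p id).det := by
  have rows : A * B = fun m => ∑ i, A m i • B i := by
    ext m k
    simp [Matrix.mul_apply]
  rw [rows]
  refine (detRowAlternating.toMultilinearMap.map_sum fun m i => A m i • B i).trans ?_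
  exact Finset.sum_congr rfl fun p _ => MultilinearMap.map_smul_univ _ _ _

-- Every family of distinct rows is counted once per ordering, which accounts for the factorial.
lemma factorial_mul_det_mul (A : Matrix n ι R) (B : Matrix ι n R) :
    ((Fintype.card n).factorial : R) * (A * B).det =
      ∑ p : n → ι, (A.submatrix id p).det * (B.submatrix p id).det := by
  have reindexed (σ : Equiv.Perm n) : (A * B).det =
      ∑ p : n → ι, Equiv.Perm.sign σ * (∏ m, A m (p (σ m))) * (B.submatrix p id).det := by
    rw [det_mul_eq_sum_prod_mul_det, ← (σ.arrowCongr (Equiv.refl ι)).symm.sum_comp]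
    refine Finset.sum_congr rfl fun p _ => ?_
    have det_permuted : (B.submatrix (p ∘ σ) id).det =
        Equiv.Perm.sign σ * (B.submatrix p id).det := det_permute σ (B.submatrix p id)
    change (∏ m, A m (p (σ m))) * (B.submatrix (p ∘ σ) id).det = _
    rw [det_permuted]
    ring
  calc ((Fintype.card n).factorial : R) * (A * B).det
      = ∑ _σ : Equiv.Perm n, (A * B).det := by
        rw [Finset.sum_const, Finset.card_univ, Fintype.card_perm, nsmul_eq_mul]
    _ = ∑ p : n → ι, (∑ σ : Equiv.Perm n, Equiv.Perm.sign σ * ∏ m, A m (p (σ m))) *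
          (B.submatrix p id).det := by
        rw [Finset.sum_congr rfl fun σ _ => reindexed σ, Finset.sum_comm]
        simp only [Finset.sum_mul]
    _ = _ := Finset.sum_congr rfl fun p _ => by
        rw [← det_transpose (A.submatrix id p), det_apply' (A.submatrix id p)ᵀ]
        rfl

lemma factorial_mul_det_sum_smul_vecMulVec (w : ι → R) (g h : ι → n → R) :
    ((Fintype.card n).factorial : R) * (∑ i, w i • vecMulVec (g i) (h i)).det =
      ∑ p : n → ι, (∏ m, w (p m)) *
        (((of g).submatrix p id).det * ((of h).submatrix p id).det) := by
  classical
  have factorization : ∑ i, w i • vecMulVec (g i) (h i) = (of g)ᵀ * diagonal w * of h := by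
    ext m k
    rw [Matrix.mul_apply]
    simp [Matrix.sum_apply, vecMulVec_apply, mul_left_comm, mul_assoc]
  have minor (p : n → ι) : ((of g)ᵀ * diagonal w).submatrix id p =
      ((of g).submatrix p id)ᵀ * diagonal (w ∘ p) := by
    ext m k
    simp
  rw [factorization, factorial_mul_det_mul]
  refine Finset.sum_congr rfl fun p _ => ?_
  rw [minor, det_mul, det_transpose, det_diagonal]
  simp only [Function.comp_apply]
  ring

end CauchyBinet

lemma exists_det_submatrix_ne_zero_of_span_eq_top {n ι K : Type*} [Fintype n] [DecidableEq n]
    [Field K] {h : ι → n → K} (hspan : Submodule.span K (Set.range h) = ⊤) :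
    ∃ p : n → ι, ((of h).submatrix p id).det ≠ 0 := by
  obtain ⟨κ, a, -, span_eq, indep⟩ := exists_linearIndependent' K h
  let b : Module.Basis κ K (n → K) := .mk indep (span_eq.trans hspan).ge
  let e : n ≃ κ := (Pi.basisFun K n).indexEquiv b
  refine ⟨a ∘ e, IsUnit.ne_zero ((isUnit_iff_isUnit_det _).1 ?_)⟩
  exact linearIndependent_rows_iff_isUnit.1 (indep.comp e e.injective)

section RCLike

variable {𝕜 n ι : Type*} [RCLike 𝕜] [Fintype n] [DecidableEq n] [Fintype ι]

lemma re_det_sum_smul_vecMulVec_star (w : ι → ℝ) (h : ι → n → 𝕜) :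
    RCLike.re (∑ i, (w i : 𝕜) • vecMulVec (h i) (star (h i))).det =
      ∑ p : n → ι, ((Fintype.card n).factorial : ℝ)⁻¹ * ‖((of h).submatrix p id).det‖ ^ 2 *
        ∏ m, w (p m) := by
  have det_star (p : n → ι) : ((of fun i => star (h i)).submatrix p id).det =
      star ((of h).submatrix p id).det := by
    rw [← det_conjTranspose, ← det_transpose]
    rfl
  have cauchyBinet : ((Fintype.card n).factorial : 𝕜) *
      (∑ i, (w i : 𝕜) • vecMulVec (h i) (star (h i))).det =
      ((∑ p : n → ι, (∏ m, w (p m)) * ‖((of h).submatrix p id).det‖ ^ 2 : ℝ) : 𝕜) := by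
    rw [factorial_mul_det_sum_smul_vecMulVec]
    push_cast
    exact Finset.sum_congr rfl fun p _ => by rw [det_star, RCLike.star_def, RCLike.mul_conj]
  have re_cauchyBinet := congrArg RCLike.re cauchyBinet
  rw [RCLike.ofReal_re, ← RCLike.ofReal_natCast, RCLike.re_ofReal_mul] at re_cauchyBinet
  have factorial_ne_zero : ((Fintype.card n).factorial : ℝ) ≠ 0 := by positivity
  rw [(eq_inv_mul_iff_mul_eq₀ factorial_ne_zero).2 re_cauchyBinet, Finset.mul_sum]
  exact Finset.sum_congr rfl fun p _ => by ring

theorem logdet_sum_exp_rankOne_convex_general {E : Type*} [AddCommMonoid E] [Module ℝ E]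
    {s : Set E} (hs : Convex ℝ s) {f : ι → E → ℝ} (hf : ∀ i, ConvexOn ℝ s (f i))
    {h : ι → n → 𝕜} (hspan : Submodule.span 𝕜 (Set.range h) = ⊤) :
    ConvexOn ℝ s fun x => Real.log (RCLike.re
      (∑ i, (Real.exp (f i x) : 𝕜) • vecMulVec (h i) (star (h i))).det) := by
  obtain ⟨p₀, minor_ne_zero⟩ := exists_det_submatrix_ne_zero_of_span_eq_top hspan
  simp only [re_det_sum_smul_vecMulVec_star, ← Real.exp_sum]
  exact convexOn_log_sum_mul_exp (fun p => by positivity) ⟨p₀, by positivity⟩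
    fun p => convexOn_finset_sum hs _ fun m _ => hf (p m)

end RCLike

/-- **Lemma 1.** If `h₁, …, h_I ∈ ℂ^M` span `ℂ^M`, then
`z ↦ log det(∑ i, e^{z i} • h i (h i)ᴴ)` is convex on `ℝ^I`.
The matrix `∑ i, e^{z i} h_i h_iᴴ` is Hermitian positive definite, so its
determinant is a positive real, recovered via its real part. -/
theorem logdet_sum_exp_rankOne_convex (M I : ℕ) (hM : 0 < M) (hI : 0 < I)
    (h : Fin I → Fin M → ℂ)
    (hspan : Submodule.span ℂ (Set.range h) = ⊤) :
    ConvexOn ℝ Set.univ (fun z : Fin I → ℝ =>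
      Real.log ((∑ i, (Real.exp (z i) : ℂ) •
        Matrix.vecMulVec (h i) (fun m => star (h i m))).det.re)) :=
  logdet_sum_exp_rankOne_convex_general convex_univ
    (fun i => (LinearMap.proj i).convexOn convex_univ) hspan
end

section
/- Let H be an M-by-N complex matrix, Y an M-by-L complex matrix, z ∈ ℝ^N, and β ∈ ℝ. Let Σ = e^β I_M + H diag(e^{z}) H^*. Define Θ* = e^{-β} (e^{-β} H^* H + diag(e^{-z}))^{-1} H^* Y, where the matrix e^{-β} H^* H + diag(e^{-z}) is Hermitian positive definite and hence invertible. Then tr(Y^* Σ^{-1} Y) = e^{-β} ‖Y − H Θ*‖_F^2 + tr((Θ*)^* diag(e^{-z}) Θ*). -/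
open Matrix

/-!
By the Woodbury identity, `Σ⁻¹ Y = R⁻¹ (Y - H Θ)` with `R = e^β I`, `Γ = diag(e^z)` and
`Σ = R + H Γ Hᴴ`, while the normal equations for `Θ` read `Γ⁻¹ Θ = Hᴴ R⁻¹ (Y - H Θ)`. Splitting
`Y = (Y - H Θ) + H Θ` in `Yᴴ R⁻¹ (Y - H Θ)` then produces the residual term and `Θᴴ Γ⁻¹ Θ`.
-/

section StarRing

variable {m n l α : Type*} [Fintype m] [Fintype n] [DecidableEq m] [DecidableEq n]
  [CommRing α] [StarRing α]

/-- The posterior mean of `X` given `Y = H X + E`, in the linear Gaussian model where the columns of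
`X` and `E` have covariances `Γ` and `R`. It is the minimizer `Θ*` in the majorization inequality;
the formula is meaningful when `R`, `Γ` and `Hᴴ R⁻¹ H + Γ⁻¹` are invertible. -/
noncomputable def posteriorMean (R : Matrix m m α) (Γ : Matrix n n α) (H : Matrix m n α)
    (Y : Matrix m l α) : Matrix n l α :=
  (Hᴴ * R⁻¹ * H + Γ⁻¹)⁻¹ * (Hᴴ * (R⁻¹ * Y))

variable {R : Matrix m m α} {Γ : Matrix n n α} {H : Matrix m n α}

theorem inv_mul_posteriorMean (hK : IsUnit (Hᴴ * R⁻¹ * H + Γ⁻¹)) (Y : Matrix m l α) :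
    Γ⁻¹ * posteriorMean R Γ H Y = Hᴴ * (R⁻¹ * (Y - H * posteriorMean R Γ H Y)) := by
  have normal_eq : (Hᴴ * R⁻¹ * H + Γ⁻¹) * posteriorMean R Γ H Y = Hᴴ * (R⁻¹ * Y) :=
    mul_nonsing_inv_cancel_left _ _ ((isUnit_iff_isUnit_det _).1 hK)
  rw [Matrix.mul_sub, Matrix.mul_sub, ← normal_eq]
  simp only [Matrix.add_mul, Matrix.mul_assoc, add_sub_cancel_left]

theorem inv_add_mul_mul_conjTranspose_mul (hR : IsUnit R) (hΓ : IsUnit Γ)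
    (hK : IsUnit (Hᴴ * R⁻¹ * H + Γ⁻¹)) (Y : Matrix m l α) :
    (R + H * Γ * Hᴴ)⁻¹ * Y = R⁻¹ * (Y - H * posteriorMean R Γ H Y) := by
  rw [add_comm] at hK
  rw [add_mul_mul_inv_eq_sub R H Γ Hᴴ hR hΓ hK, posteriorMean, add_comm (Hᴴ * R⁻¹ * H)]
  simp only [Matrix.sub_mul, Matrix.mul_sub, Matrix.mul_assoc]

theorem conjTranspose_mul_inv_add_mul_mul_conjTranspose_mul (hR : IsUnit R) (hΓ : IsUnit Γ)
    (hK : IsUnit (Hᴴ * R⁻¹ * H + Γ⁻¹)) (Y : Matrix m l α) :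
    Yᴴ * (R + H * Γ * Hᴴ)⁻¹ * Y =
      (Y - H * posteriorMean R Γ H Y)ᴴ * R⁻¹ * (Y - H * posteriorMean R Γ H Y) +
        (posteriorMean R Γ H Y)ᴴ * Γ⁻¹ * posteriorMean R Γ H Y := by
  set Θ := posteriorMean R Γ H Y with hΘ
  calc Yᴴ * (R + H * Γ * Hᴴ)⁻¹ * Y
      = Yᴴ * (R⁻¹ * (Y - H * Θ)) := by
        rw [Matrix.mul_assoc, inv_add_mul_mul_conjTranspose_mul hR hΓ hK]
    _ = ((Y - H * Θ) + H * Θ)ᴴ * (R⁻¹ * (Y - H * Θ)) := by rw [sub_add_cancel]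
    _ = (Y - H * Θ)ᴴ * (R⁻¹ * (Y - H * Θ)) + Θᴴ * (Hᴴ * (R⁻¹ * (Y - H * Θ))) := by
        rw [conjTranspose_add, conjTranspose_mul H, Matrix.add_mul, Matrix.mul_assoc Θᴴ]
    _ = (Y - H * Θ)ᴴ * R⁻¹ * (Y - H * Θ) + Θᴴ * Γ⁻¹ * Θ := by
        rw [hΘ, ← inv_mul_posteriorMean hK, Matrix.mul_assoc, Matrix.mul_assoc]

end StarRing

section StarOrderedField

variable {m n l K : Type*} [Fintype m] [Fintype n] [DecidableEq m] [DecidableEq n]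
  [Field K] [PartialOrder K] [StarRing K] [StarOrderedRing K]
  {R : Matrix m m K} {Γ : Matrix n n K}

theorem posDef_conjTranspose_mul_inv_mul_add_inv (hR : R.PosSemidef) (hΓ : Γ.PosDef)
    (H : Matrix m n K) : (Hᴴ * R⁻¹ * H + Γ⁻¹).PosDef :=
  .posSemidef_add (hR.inv.conjTranspose_mul_mul_same H) hΓ.inv

theorem trace_inv_quadratic_upper_bound_eq_general [Fintype l] (hR : R.PosDef) (hΓ : Γ.PosDef)
    (H : Matrix m n K) (Y : Matrix m l K) :
    (Yᴴ * (R + H * Γ * Hᴴ)⁻¹ * Y).trace =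
      ((Y - H * posteriorMean R Γ H Y)ᴴ * R⁻¹ * (Y - H * posteriorMean R Γ H Y)).trace +
        ((posteriorMean R Γ H Y)ᴴ * Γ⁻¹ * posteriorMean R Γ H Y).trace := by
  have hK := (posDef_conjTranspose_mul_inv_mul_add_inv hR.posSemidef hΓ H).isUnit
  rw [conjTranspose_mul_inv_add_mul_mul_conjTranspose_mul hR.isUnit hΓ.isUnit hK, trace_add]

end StarOrderedField

open scoped ComplexOrder

section Exp

variable {n : Type*} [DecidableEq n]

theorem posDef_diagonal_exp (z : n → ℝ) :
    (diagonal fun i => (Real.exp (z i) : ℂ)).PosDef :=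
  .diagonal fun i => mod_cast Real.exp_pos (z i)

theorem posDef_exp_smul_one (β : ℝ) : ((Real.exp β : ℂ) • (1 : Matrix n n ℂ)).PosDef := by
  simpa only [smul_one_eq_diagonal] using posDef_diagonal_exp fun _ : n => β

theorem inv_diagonal_exp [Fintype n] (z : n → ℝ) :
    (diagonal fun i => (Real.exp (z i) : ℂ))⁻¹ = diagonal fun i => (Real.exp (-z i) : ℂ) :=
  inv_eq_right_inv (by simp [← Complex.exp_add])

theorem inv_exp_smul_one [Fintype n] (β : ℝ) :
    ((Real.exp β : ℂ) • (1 : Matrix n n ℂ))⁻¹ = (Real.exp (-β) : ℂ) • 1 := by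
  simpa only [smul_one_eq_diagonal] using inv_diagonal_exp fun _ : n => β

end Exp

/-- **Equality case of the majorization inequality (4), at the choice (5).**
With `Σ = e^β I + H diag(e^z) Hᴴ` and
`Θ* = e^{-β} (e^{-β} Hᴴ H + diag(e^{-z}))⁻¹ Hᴴ Y`, one has
`tr(Yᴴ Σ⁻¹ Y) = e^{-β} ‖Y − HΘ*‖_F² + tr((Θ*)ᴴ diag(e^{-z}) Θ*)`. -/
theorem trace_inv_quadratic_upper_bound_eq (M N L : ℕ)
    (H : Matrix (Fin M) (Fin N) ℂ) (Y : Matrix (Fin M) (Fin L) ℂ)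
    (z : Fin N → ℝ) (β : ℝ) :
    let Θ : Matrix (Fin N) (Fin L) ℂ :=
      (Real.exp (-β) : ℂ) •
        (((Real.exp (-β) : ℂ) • (Hᴴ * H) +
          Matrix.diagonal (fun n => (Real.exp (-(z n)) : ℂ)))⁻¹ * (Hᴴ * Y))
    (Matrix.trace (Yᴴ *
        ((Real.exp β : ℂ) • (1 : Matrix (Fin M) (Fin M) ℂ) +
          H * Matrix.diagonal (fun n => (Real.exp (z n) : ℂ)) * Hᴴ)⁻¹ * Y)).re =
      Real.exp (-β) * (Matrix.trace ((Y - H * Θ)ᴴ * (Y - H * Θ))).re +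
        (Matrix.trace (Θᴴ * Matrix.diagonal (fun n => (Real.exp (-(z n)) : ℂ)) * Θ)).re := by
  have trace_eq :=
    trace_inv_quadratic_upper_bound_eq_general (posDef_exp_smul_one β) (posDef_diagonal_exp z) H Y
  simpa only [posteriorMean, inv_exp_smul_one, inv_diagonal_exp, Matrix.mul_smul, Matrix.smul_mul,
    Matrix.mul_one, Matrix.one_mul, trace_smul, smul_eq_mul, Complex.add_re, Complex.re_ofReal_mul]
    using congrArg Complex.re trace_eq
end
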